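/- (ii) Let k be a positive even integer, ε ∈ {±1}, f₀ ∈ M_k(Γ₀⁺(2),ε), f₁ ∈ M_{k-2}(Γ₀⁺(2),ε) with f₁ ≢ 0, and f = f₀ + M₂* f₁ where M₂*(z) = (2E₂(2z)+E₂(z))/3 (here α = 4/(πi)). Then there exist κ_{ρ₁}, κ_{ρ₂} ∈ (1/2)ℤ with κ_{ρ₁}, κ_{ρ₂} ≥ 1/2 such that lim_{z→ρ₁} (z−ρ₁)² Q_f(z) = (1/4 − κ_{ρ₁}²)/(4π²) and lim_{z→ρ₂} (z−ρ₂)² Q_f(z) = (1/4 − κ_{ρ₂}²)/(4π²), where ρ₁ = i/√2 and ρ₂ = (1+i)/2, and both integers 2κ_{ρ₁} and 2κ_{ρ₂} are odd. (iii) Let m ∈ {0,1,2,3}, k a positive integer with k ≡ m (mod 2), f₀ ∈ M_k(Γ₀⁺(3),χ^m), f₁ ∈ M_{k-2}(Γ₀⁺(3),χ^m) with f₁ ≢ 0, and f = f₀ + M₂* f₁ where now M₂*(z) = (3E₂(3z)+E₂(z))/4 (here α = 3/(πi)). Then there exist κ_{ρ₁}, κ_{ρ₂} ∈ (1/2)ℤ,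 ≥ 1/2, with the same limit relations at ρ₁ = i/√3 and ρ₂ = (3+√−3)/6, such that 2κ_{ρ₁} is odd and 2κ_{ρ₂} is coprime to 6. -/

import Mathlib

noncomputable section

open Complex Matrix Filter Topology

abbrev SL2R := Matrix.SpecialLinearGroup (Fin 2) ℝ
abbrev SL2Z := Matrix.SpecialLinearGroup (Fin 2) ℤ

/-- The upper half-plane, as a subset of `ℂ`. -/
def UHP : Set ℂ := {z : ℂ | 0 < z.im}

/-- The embedding of `SL(2,ℤ)` into `SL(2,ℝ)`. -/
def toR : SL2Z →* SL2R := Matrix.SpecialLinearGroup.map (Int.castRingHom ℝ)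

/-- `SL(2,ℤ)` as a subgroup of `SL(2,ℝ)`. -/
def SL2ZR : Subgroup SL2R := Subgroup.map toR ⊤

/-- Möbius action of a real matrix on a complex number. -/
def moeb (γ : SL2R) (z : ℂ) : ℂ :=
  ((γ.1 0 0 : ℂ) * z + (γ.1 0 1 : ℂ)) / ((γ.1 1 0 : ℂ) * z + (γ.1 1 1 : ℂ))

/-- The automorphy factor `cz + d`. -/
def jfac (γ : SL2R) (z : ℂ) : ℂ := (γ.1 1 0 : ℂ) * z + (γ.1 1 1 : ℂ)

/-- A holomorphic modular form of weight `k` and character `χ` on `Γ ≤ SL(2,ℝ)`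
(for `Γ` commensurable with `SL(2,ℤ)`): holomorphic on `ℍ`, satisfying the
transformation law, and holomorphic (bounded) at every cusp. -/
structure IsModularForm (Γ : Subgroup SL2R) (χ : SL2R → ℂ) (k : ℤ) (f : ℂ → ℂ) : Prop where
  holo : DifferentiableOn ℂ f UHP
  transform : ∀ γ ∈ Γ, ∀ z ∈ UHP, f (moeb γ z) = χ γ * jfac γ z ^ k * f z
  bdd_at_cusps : ∀ σ : SL2Z, ∃ C : ℝ, ∀ z ∈ UHP, 1 ≤ z.im →
    ‖jfac (toR σ) z ^ (-k) * f (moeb (toR σ) z)‖ ≤ C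

/-- A finite-order character of `Γ`. -/
def IsCharacter (Γ : Subgroup SL2R) (χ : SL2R → ℂ) : Prop :=
  (∀ γ ∈ Γ, ∀ δ ∈ Γ, χ (γ * δ) = χ γ * χ δ) ∧
    ∃ n : ℕ, 0 < n ∧ ∀ γ ∈ Γ, χ γ ^ n = 1

/-- `φ` is quasimodular of weight 2 and depth 1 on `Γ`, with constant `α`:
`(cz+d)⁻² φ(γz) = φ(z) + α c/(cz+d)`. -/
def IsQuasiWt2 (Γ : Subgroup SL2R) (α : ℂ) (φ : ℂ → ℂ) : Prop :=
  ∀ γ ∈ Γ, ∀ z ∈ UHP,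
    (jfac γ z)⁻¹ ^ 2 * φ (moeb γ z) = φ z + α * (γ.1 1 0 : ℂ) / jfac γ z

/-- `f` has vanishing order `ν` at the cusp `∞`, with respect to `q_N = e^{2πiz/N}`:
`q_N^{-ν}·f(z)` tends to a nonzero constant as `Im z → ∞`. -/
def VOrder (N : ℝ) (f : ℂ → ℂ) (ν : ℝ) : Prop :=
  ∃ c : ℂ, c ≠ 0 ∧ ∀ ε : ℝ, 0 < ε → ∃ Y : ℝ, ∀ z : ℂ, Y ≤ z.im →
    ‖Complex.exp (-(2 * Real.pi * Complex.I * (ν : ℂ) * z / (N : ℂ))) * f z - c‖ < ε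


/-- `Γ₀(N)` as a subgroup of `SL(2,ℝ)`. -/
def Gamma0R (N : ℕ) : Subgroup SL2R := Subgroup.map toR (CongruenceSubgroup.Gamma0 N)

/-- `q = e^{2πiz}`. -/
def qexp (z : ℂ) : ℂ := Complex.exp (2 * Real.pi * Complex.I * z)

/-- The quasimodular Eisenstein series `E₂(z) = 1 - 24 ∑_{n≥1} σ₁(n) qⁿ`. -/
def E2 (z : ℂ) : ℂ :=
  1 - 24 * ∑' n : ℕ, (ArithmeticFunction.sigma 1 (n + 1) : ℂ) * qexp z ^ (n + 1)

/-- `M_k(Γ₀⁺(2),ε)`. -/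
def MFplus2 (ε : ℂ) (k : ℤ) : Set (ℂ → ℂ) :=
  {f | IsModularForm (Gamma0R 2) (fun _ => 1) k f ∧
    ∀ z ∈ UHP, ((Real.sqrt 2 : ℂ) * z) ^ (-k) * f (-1 / (2 * z)) = ε * f z}

/-- `S₃ = (1/√3)(0 -1; 3 0)`. -/
def S3elt : SL2R :=
  ⟨!![0, -(Real.sqrt 3)⁻¹; Real.sqrt 3, 0], by
    have h : Real.sqrt 3 ≠ 0 := by positivity
    rw [Matrix.det_fin_two_of, mul_zero, neg_mul, inv_mul_cancel₀ h, zero_sub, neg_neg]⟩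

/-- `R₃ = (1/√3)(3 -1; 3 0)`. -/
def R3elt : SL2R :=
  ⟨!![Real.sqrt 3, -(Real.sqrt 3)⁻¹; Real.sqrt 3, 0], by
    have h : Real.sqrt 3 ≠ 0 := by positivity
    rw [Matrix.det_fin_two_of, mul_zero, neg_mul, inv_mul_cancel₀ h, zero_sub, neg_neg]⟩

/-- `Γ₀⁺(3) = ⟨Γ₀(3), S₃⟩`. -/
def GammaPlus3 : Subgroup SL2R :=
  Subgroup.closure ((Gamma0R 3 : Set SL2R) ∪ {S3elt})

/-- Modular forms of weight `k` with character `χ` on a subgroup `Γ ≤ SL(2,ℝ)`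
whose only cusp is `∞`: holomorphic on `ℍ`, transforming with `χ·(cz+d)^k`,
and holomorphic (bounded) at `∞`. -/
def MFchar (Γ : Subgroup SL2R) (χ : SL2R → ℂ) (k : ℤ) (f : ℂ → ℂ) : Prop :=
  DifferentiableOn ℂ f UHP ∧
    (∀ γ ∈ Γ, ∀ z ∈ UHP, f (moeb γ z) = χ γ * jfac γ z ^ k * f z) ∧
    ∃ C : ℝ, ∀ z ∈ UHP, 1 ≤ z.im → ‖f z‖ ≤ C

/-- The expression `Q_f = -(1/4π²)[f″/f - (f′/f)(W′/W) + (3/4)(W′/W)² - (1/2)(W″/W)]`. -/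
def Qformula (f W : ℂ → ℂ) (z : ℂ) : ℂ :=
  -(1 / (4 * (Real.pi : ℂ) ^ 2)) *
    (deriv (deriv f) z / f z - (deriv f z / f z) * (deriv W z / W z)
      + (3 / 4) * (deriv W z / W z) ^ 2 - (1 / 2) * (deriv (deriv W) z / W z))

/-!
Let `γ` be an elliptic element fixing `ρ ∈ ℍ`, hence also `ρ̄`. Quasimodularity of `f = f₀ + M₂* f₁`
under `γ` makes `P_r(z) = (z - r) f(z) + α f₁(z)` an eigenfunction of `γ` for `r ∈ {ρ, ρ̄}`. Up to
the factor `(ρ - ρ̄)⁻¹`, `f` is the difference `P_ρ̄ - P_ρ` and `W_f` is the Wronskian of `P_ρ̄` and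
`P_ρ`, so `2κ_ρ` is, up to sign, the difference of their vanishing orders at `ρ`. These orders are
finite: were `P_r` zero, comparing it with its translate by `z ↦ z + 1` would give `f = 0` and then
`f₁ = 0`. Comparing leading coefficients at `ρ` in `P_r(γz) = m_r(z) P_r(z)` for `r = ρ, ρ̄` shows
that this difference is `1` modulo the order of the derivative of `γ` at `ρ`. That order is `2` for
`S_N`, and `4`, respectively `6`, for `T S_N` when `N = 2`, respectively `N = 3`.
-/

section LocalAnalysis

variable {f W : ℂ → ℂ} {ρ : ℂ} {a w : ℤ}

lemma exists_analyticAt_sub_mul_logDeriv_eventuallyEq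
    (hf : MeromorphicAt f ρ) (ha : meromorphicOrderAt f ρ = a) :
    ∃ ℓ : ℂ → ℂ, AnalyticAt ℂ ℓ ρ ∧ ℓ ρ = a ∧ ∀ᶠ z in 𝓝[≠] ρ, logDeriv f z = ℓ z / (z - ρ) := by
  obtain ⟨g, hg, hg0, hfg⟩ := (meromorphicOrderAt_eq_int_iff hf).1 ha
  refine ⟨fun z => a + (z - ρ) * logDeriv g z, ?_, by simp, ?_⟩
  · have : AnalyticAt ℂ (logDeriv g) ρ := hg.deriv.div hg hg0
    fun_prop
  · filter_upwards [logDeriv_congr_nhdsNE hfg, self_mem_nhdsWithin,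
      hg.eventually_analyticAt.filter_mono nhdsWithin_le_nhds,
      (hg.continuousAt.eventually_ne hg0).filter_mono nhdsWithin_le_nhds] with z hz hzρ hgz hgz0
    have hsub : z - ρ ≠ 0 := sub_ne_zero.mpr hzρ
    have hpow : HasDerivAt (fun z => (z - ρ) ^ a) (a * (z - ρ) ^ (a - 1)) z :=
      (hasDerivAt_zpow a _ (.inl hsub)).comp_sub_const z ρ
    have hprod : logDeriv f z = logDeriv (fun z => (z - ρ) ^ a * g z) z := hz
    rw [hprod, logDeriv_mul (f := fun z => (z - ρ) ^ a) z (zpow_ne_zero a hsub) hgz0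
      hpow.differentiableAt hgz.differentiableAt, logDeriv_apply, hpow.deriv, zpow_sub_one₀ hsub]
    field_simp

lemma tendsto_sub_mul_deriv_div (hf : MeromorphicAt f ρ) (ha : meromorphicOrderAt f ρ = a) :
    Tendsto (fun z => (z - ρ) * (deriv f z / f z)) (𝓝[≠] ρ) (𝓝 a) := by
  obtain ⟨ℓ, hℓ, hℓρ, hfℓ⟩ := exists_analyticAt_sub_mul_logDeriv_eventuallyEq hf ha
  rw [← hℓρ]
  refine (hℓ.continuousAt.tendsto.mono_left nhdsWithin_le_nhds).congr' ?_
  filter_upwards [hfℓ, self_mem_nhdsWithin] with z hz hzρ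
  rw [← logDeriv_apply, hz, mul_div_cancel₀ _ (sub_ne_zero.mpr hzρ)]

lemma eventually_deriv_deriv_div_eq (hf : MeromorphicAt f ρ) (ha : meromorphicOrderAt f ρ ≠ ⊤) :
    ∀ᶠ z in 𝓝[≠] ρ, deriv (deriv f) z / f z = deriv (logDeriv f) z + logDeriv f z ^ 2 := by
  filter_upwards [hf.eventually_analyticAt,
    (meromorphicOrderAt_ne_top_iff_eventually_ne_zero hf).1 ha] with z hfz hfz0
  have hdiv : HasDerivAt (logDeriv f) _ z :=
    hfz.deriv.differentiableAt.hasDerivAt.div hfz.differentiableAt.hasDerivAt hfz0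
  rw [hdiv.deriv, logDeriv_apply]
  field_simp
  ring

lemma tendsto_sub_sq_mul_deriv_deriv_div
    (hf : MeromorphicAt f ρ) (ha : meromorphicOrderAt f ρ = a) :
    Tendsto (fun z => (z - ρ) ^ 2 * (deriv (deriv f) z / f z)) (𝓝[≠] ρ) (𝓝 (a * (a - 1))) := by
  obtain ⟨ℓ, hℓ, hℓρ, hfℓ⟩ := exists_analyticAt_sub_mul_logDeriv_eventuallyEq hf ha
  have hlim : ContinuousAt (fun z => (z - ρ) * deriv ℓ z - ℓ z + ℓ z ^ 2) ρ := by
    have := hℓ.deriv.continuousAt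
    have := hℓ.continuousAt
    fun_prop
  have hval : (a * (a - 1) : ℂ) = (ρ - ρ) * deriv ℓ ρ - ℓ ρ + ℓ ρ ^ 2 := by
    rw [hℓρ]
    ring
  rw [hval]
  refine (hlim.tendsto.mono_left nhdsWithin_le_nhds).congr' ?_
  filter_upwards [hfℓ, EventuallyEq.nhdsNE_deriv hfℓ, self_mem_nhdsWithin,
    hℓ.eventually_analyticAt.filter_mono nhdsWithin_le_nhds,
    eventually_deriv_deriv_div_eq hf (by simp [ha])] with z hz hz' hzρ hℓz hff
  have hsub : z - ρ ≠ 0 := sub_ne_zero.mpr hzρ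
  have hdiv : HasDerivAt (fun z => ℓ z / (z - ρ)) _ z :=
    hℓz.differentiableAt.hasDerivAt.div ((hasDerivAt_id z).sub_const ρ) hsub
  rw [hff, hz', hdiv.deriv, hz]
  field_simp

/-- The equation `y″ = -4π² Q y` attached to `f` and `W` has indicial roots `1/2 ± n/2` at `ρ`,
that is, `κ_ρ = n/2`. The limit is taken over a full punctured neighbourhood of `ρ`. -/
def HasExponentDifference (f W : ℂ → ℂ) (ρ : ℂ) (n : ℤ) : Prop :=
  Tendsto (fun z => (z - ρ) ^ 2 * Qformula f W z) (𝓝[≠] ρ)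
    (𝓝 ((1 / 4 - ((n : ℂ) / 2) ^ 2) / (4 * (Real.pi : ℂ) ^ 2)))

lemma HasExponentDifference.neg {n : ℤ} (h : HasExponentDifference f W ρ n) :
    HasExponentDifference f W ρ (-n) := by
  simpa [HasExponentDifference, neg_div] using h

lemma hasExponentDifference_of_meromorphicOrderAt
    (hf : MeromorphicAt f ρ) (hW : MeromorphicAt W ρ)
    (ha : meromorphicOrderAt f ρ = a) (hw : meromorphicOrderAt W ρ = w) :
    HasExponentDifference f W ρ (2 * a - w - 1) := by
  have hf₁ := tendsto_sub_mul_deriv_div hf ha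
  have hf₂ := tendsto_sub_sq_mul_deriv_deriv_div hf ha
  have hW₁ := tendsto_sub_mul_deriv_div hW hw
  have hW₂ := tendsto_sub_sq_mul_deriv_deriv_div hW hw
  have hQ := (((hf₂.sub (hf₁.mul hW₁)).add ((hW₁.pow 2).const_mul (3 / 4))).sub
    (hW₂.const_mul (1 / 2))).const_mul (-(1 / (4 * (Real.pi : ℂ) ^ 2)))
  unfold HasExponentDifference
  convert hQ using 2
  · simp only [Qformula]
    ring
  · push_cast
    ring

variable {A B : ℂ → ℂ} {s t : ℤ}

lemma meromorphicOrderAt_wronskian (hA : MeromorphicAt A ρ) (hB : MeromorphicAt B ρ)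
    (hs : meromorphicOrderAt A ρ = s) (ht : meromorphicOrderAt B ρ = t) (hst : s ≠ t) :
    meromorphicOrderAt (deriv A * B - A * deriv B) ρ = (s + t - 1 : ℤ) := by
  set V : ℂ → ℂ := deriv A * B - A * deriv B with hVdef
  have hV : MeromorphicAt V ρ := (hA.deriv.mul hB).sub (hA.mul hB.deriv)
  have hlin : MeromorphicAt (· - ρ) ρ := by fun_prop
  have hlim : Tendsto ((· - ρ) * V / (A * B)) (𝓝[≠] ρ) (𝓝 (s - t)) := by
    refine ((tendsto_sub_mul_deriv_div hA hs).sub (tendsto_sub_mul_deriv_div hB ht)).congr' ?_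
    filter_upwards [(meromorphicOrderAt_ne_top_iff_eventually_ne_zero hA).1 (by simp [hs]),
      (meromorphicOrderAt_ne_top_iff_eventually_ne_zero hB).1 (by simp [ht])] with z hAz hBz
    simp only [hVdef, Pi.mul_apply, Pi.sub_apply, Pi.div_apply]
    field_simp
  have hzero := (tendsto_ne_zero_iff_meromorphicOrderAt_eq_zero
    ((hlin.mul hV).div (hA.mul hB))).1 ⟨_, sub_ne_zero.mpr (by exact_mod_cast hst), hlim⟩
  rw [meromorphicOrderAt_div (hlin.mul hV) (hA.mul hB), meromorphicOrderAt_mul hlin hV,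
    meromorphicOrderAt_mul hA hB, hs, ht, meromorphicOrderAt_id_sub_const] at hzero
  cases hord : meromorphicOrderAt V ρ with
  | top => simp [hord, ← WithTop.coe_add] at hzero
  | coe v =>
    rw [hord] at hzero
    norm_cast at hzero ⊢
    omega

lemma hasExponentDifference_of_sub_of_wronskian {δ : ℂ} (hδ : δ ≠ 0)
    (hA : MeromorphicAt A ρ) (hB : MeromorphicAt B ρ)
    (hs : meromorphicOrderAt A ρ = s) (ht : meromorphicOrderAt B ρ = t) (hst : s ≠ t)
    (hf : f =ᶠ[𝓝[≠] ρ] (fun _ => δ⁻¹) * (A - B))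
    (hW : W =ᶠ[𝓝[≠] ρ] (fun _ => δ⁻¹) * (deriv A * B - A * deriv B)) :
    HasExponentDifference f W ρ (t - s) := by
  have hδinv : AnalyticAt ℂ (fun _ => δ⁻¹) ρ := analyticAt_const
  have hAB : MeromorphicAt (A - B) ρ := hA.sub hB
  have hV : MeromorphicAt (deriv A * B - A * deriv B) ρ := (hA.deriv.mul hB).sub (hA.mul hB.deriv)
  have hordf : meromorphicOrderAt f ρ = (min s t : ℤ) := by
    rw [meromorphicOrderAt_congr hf, meromorphicOrderAt_mul_of_ne_zero hδinv (inv_ne_zero hδ),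
      sub_eq_add_neg, meromorphicOrderAt_add_of_ne hA hB.neg]
    · rw [← meromorphicOrderAt_neg, hs, ht, WithTop.coe_min]
    · simpa [← meromorphicOrderAt_neg, hs, ht] using hst
  have hordW : meromorphicOrderAt W ρ = (s + t - 1 : ℤ) := by
    rw [meromorphicOrderAt_congr hW, meromorphicOrderAt_mul_of_ne_zero hδinv (inv_ne_zero hδ),
      meromorphicOrderAt_wronskian hA hB hs ht hst]
  have hdiff := hasExponentDifference_of_meromorphicOrderAt
    ((hδinv.meromorphicAt.mul hAB).congr hf.symm)
    ((hδinv.meromorphicAt.mul hV).congr hW.symm) hordf hordW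
  rcases le_total s t with hle | hle
  · convert hdiff.neg using 1
    rw [min_eq_left hle]
    ring
  · convert hdiff using 1
    rw [min_eq_right hle]
    ring

lemma zpow_meromorphicOrderAt_eq_of_comp_eq_mul {γ m : ℂ → ℂ} {γ' : ℂ}
    (hA : MeromorphicAt A ρ) (hs : meromorphicOrderAt A ρ = s)
    (hγ : HasDerivAt γ γ' ρ) (hγ' : γ' ≠ 0) (hγρ : γ ρ = ρ) (hm : ContinuousAt m ρ)
    (hAγ : ∀ᶠ z in 𝓝 ρ, A (γ z) = m z * A z) : γ' ^ s = m ρ := by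
  obtain ⟨g, hg, hg0, hAg⟩ := (meromorphicOrderAt_eq_int_iff hA).1 hs
  have hγtendsto : Tendsto γ (𝓝[≠] ρ) (𝓝[≠] ρ) := by
    simpa only [hγρ] using hγ.tendsto_nhdsNE hγ'
  have hgρ : Tendsto g (𝓝[≠] ρ) (𝓝 (g ρ)) := hg.continuousAt.tendsto.mono_left nhdsWithin_le_nhds
  have hleft : Tendsto (fun z => slope γ ρ z ^ s * g (γ z)) (𝓝[≠] ρ) (𝓝 (γ' ^ s * g ρ)) :=
    ((hasDerivAt_iff_tendsto_slope.1 hγ).zpow₀ s (.inl hγ')).mul (hgρ.comp hγtendsto)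
  have hright : Tendsto (fun z => m z * g z) (𝓝[≠] ρ) (𝓝 (m ρ * g ρ)) :=
    (hm.tendsto.mono_left nhdsWithin_le_nhds).mul hgρ
  refine mul_right_cancel₀ hg0 (tendsto_nhds_unique (hleft.congr' ?_) hright)
  filter_upwards [hAg, hγtendsto.eventually hAg, hAγ.filter_mono nhdsWithin_le_nhds,
    self_mem_nhdsWithin] with z hz hγz heq hzρ
  have hsub : (z - ρ) ^ s ≠ 0 := zpow_ne_zero s (sub_ne_zero.mpr hzρ)
  rw [hz, hγz, smul_eq_mul, smul_eq_mul] at heq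
  rw [slope_def_field, hγρ, div_zpow]
  field_simp
  linear_combination heq

end LocalAnalysis

section Moebius

open scoped ComplexConjugate

variable {γ : SL2R} {z w ρ : ℂ}

lemma isOpen_UHP : IsOpen UHP := isOpen_lt continuous_const Complex.continuous_im

lemma isPreconnected_UHP : IsPreconnected UHP := (convex_halfSpace_im_gt 0).isPreconnected

lemma ne_zero_of_mem_UHP (hz : z ∈ UHP) : z ≠ 0 := by
  rintro rfl
  simp [UHP] at hz

lemma jfac_ne_zero (hz : z.im ≠ 0) : jfac γ z ≠ 0 := by
  intro hj
  have hc : γ.1 1 0 = 0 := by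
    simpa [jfac, hz] using congrArg Complex.im hj
  have hd : γ.1 1 1 = 0 := by
    simpa [jfac, hc] using hj
  have hdet := γ.2
  rw [Matrix.det_fin_two, hc, hd, mul_zero, mul_zero, sub_zero] at hdet
  exact zero_ne_one hdet

lemma det_ofReal_eq_one (γ : SL2R) :
    (γ.1 0 0 : ℂ) * γ.1 1 1 - γ.1 0 1 * γ.1 1 0 = 1 := by
  exact_mod_cast (Matrix.det_fin_two γ.1).symm.trans γ.2

lemma moeb_sub_moeb (hz : jfac γ z ≠ 0) (hw : jfac γ w ≠ 0) :
    moeb γ z - moeb γ w = (z - w) / (jfac γ z * jfac γ w) := by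
  unfold jfac at hz hw
  simp only [moeb, jfac]
  rw [div_sub_div _ _ hz hw]
  congr 1
  linear_combination (z - w) * det_ofReal_eq_one γ

lemma hasDerivAt_moeb (hz : jfac γ z ≠ 0) : HasDerivAt (moeb γ) ((jfac γ z ^ 2)⁻¹) z := by
  have hlin (a b : ℂ) : HasDerivAt (fun z => a * z + b) a z := by
    simpa using ((hasDerivAt_id z).const_mul a).add_const b
  refine ((hlin _ _).div (hlin _ _) hz).congr_deriv ?_
  rw [inv_eq_one_div]
  congr 1
  linear_combination det_ofReal_eq_one γ

lemma moeb_conj (γ : SL2R) (z : ℂ) : moeb γ (conj z) = conj (moeb γ z) := by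
  simp [moeb]

lemma sub_conj_ne_zero (hz : z.im ≠ 0) : z - conj z ≠ 0 := by
  rw [Complex.sub_conj]
  simpa using hz

lemma jfac_mul_jfac_conj_eq_one (hρ : ρ.im ≠ 0) (hfix : moeb γ ρ = ρ) :
    jfac γ ρ * jfac γ (conj ρ) = 1 := by
  have hj : jfac γ ρ ≠ 0 := jfac_ne_zero hρ
  have hj' : jfac γ (conj ρ) ≠ 0 := jfac_ne_zero (by simpa)
  have hsub := moeb_sub_moeb hj hj'
  rw [moeb_conj, hfix, eq_div_iff (mul_ne_zero hj hj')] at hsub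
  exact (mul_eq_left₀ (sub_conj_ne_zero hρ)).1 hsub

end Moebius

section QuasimodularPair

open scoped ComplexConjugate

variable {α c r ρ z : ℂ} {k : ℤ} {f f₁ : ℂ → ℂ} {γ : SL2R}

/-- The Wronskian-type function `W_f = -f² + α (f₁ f′ - f₁′ f)` of a quasimodular form `f` of
depth one, written in terms of `f` and its depth-one coefficient `f₁`. -/
def quasiWronskian (α : ℂ) (f f₁ : ℂ → ℂ) (z : ℂ) : ℂ :=
  -(f z) ^ 2 + α * (f₁ z * deriv f z - deriv f₁ z * f z)

/-- The function `z ↦ (z - r) f(z) + α f₁(z)`, which is an eigenfunction of every `γ` fixing `r`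
as soon as `f` is quasimodular under `γ` with depth-one coefficient `f₁`. -/
def fixedPointForm (α : ℂ) (f f₁ : ℂ → ℂ) (r z : ℂ) : ℂ := (z - r) * f z + α * f₁ z

/-- `f` transforms under the single element `γ` as a quasimodular form of weight `k` and depth one
with multiplier `c`, and `f₁` is its depth-one coefficient. -/
structure IsQuasimodularPair (α c : ℂ) (k : ℤ) (γ : SL2R) (f f₁ : ℂ → ℂ) : Prop where
  quasimodular : ∀ z ∈ UHP,
    f (moeb γ z) = c * jfac γ z ^ k * (f z + α * γ.1 1 0 / jfac γ z * f₁ z)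
  modular : ∀ z ∈ UHP, f₁ (moeb γ z) = c * jfac γ z ^ (k - 2) * f₁ z

lemma fixedPointForm_moeb (h : IsQuasimodularPair α c k γ f f₁) (hz : z ∈ UHP)
    (hr : jfac γ r ≠ 0) (hfix : moeb γ r = r) :
    fixedPointForm α f f₁ r (moeb γ z) =
      c * jfac γ z ^ (k - 1) / jfac γ r * fixedPointForm α f f₁ r z := by
  have hj : jfac γ z ≠ 0 := jfac_ne_zero (ne_of_gt hz)
  have hsub : moeb γ z - r = (z - r) / (jfac γ z * jfac γ r) := by
    rw [← moeb_sub_moeb hj hr, hfix]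
  have hjr : jfac γ z = γ.1 1 0 * (z - r) + jfac γ r := by
    simp only [jfac]
    ring
  simp only [fixedPointForm]
  rw [hsub, h.quasimodular z hz, h.modular z hz, zpow_sub₀ hj, zpow_sub₀ hj]
  field_simp
  linear_combination -(c * α * f₁ z) * hjr

lemma analyticOnNhd_fixedPointForm (hf : DifferentiableOn ℂ f UHP)
    (hf₁ : DifferentiableOn ℂ f₁ UHP) (r : ℂ) :
    AnalyticOnNhd ℂ (fixedPointForm α f f₁ r) UHP := by
  refine DifferentiableOn.analyticOnNhd ?_ isOpen_UHP
  unfold fixedPointForm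
  fun_prop

lemma eqOn_zero_of_fixedPointForm_eqOn_zero
    (hf : ∀ z ∈ UHP, f (z + 1) = f z) (hf₁ : ∀ z ∈ UHP, f₁ (z + 1) = f₁ z) (hα : α ≠ 0)
    (hP : Set.EqOn (fixedPointForm α f f₁ r) 0 UHP) : Set.EqOn f₁ 0 UHP := by
  intro z hz
  have hz1 : z + 1 ∈ UHP := by simpa [UHP] using hz
  have hPz : (z - r) * f z + α * f₁ z = 0 := hP hz
  have hPz1 : (z + 1 - r) * f (z + 1) + α * f₁ (z + 1) = 0 := hP hz1
  rw [hf z hz, hf₁ z hz] at hPz1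
  have hfz : f z = 0 := by linear_combination hPz1 - hPz
  simpa [hfz, hα] using hPz

lemma exists_meromorphicOrderAt_fixedPointForm_eq
    (hfd : DifferentiableOn ℂ f UHP) (hf₁d : DifferentiableOn ℂ f₁ UHP)
    (hf : ∀ z ∈ UHP, f (z + 1) = f z) (hf₁ : ∀ z ∈ UHP, f₁ (z + 1) = f₁ z)
    (hne : ∃ z ∈ UHP, f₁ z ≠ 0) (hα : α ≠ 0) (hρ : ρ ∈ UHP) (r : ℂ) :
    ∃ s : ℤ, meromorphicOrderAt (fixedPointForm α f f₁ r) ρ = s := by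
  have han := analyticOnNhd_fixedPointForm (α := α) hfd hf₁d r
  suffices meromorphicOrderAt (fixedPointForm α f f₁ r) ρ ≠ ⊤ from
    (WithTop.ne_top_iff_exists.1 this).imp fun _ => Eq.symm
  intro htop
  have hzero : fixedPointForm α f f₁ r =ᶠ[𝓝 ρ] 0 :=
    (han ρ hρ).frequently_eq_iff_eventually_eq analyticAt_const |>.1
      (meromorphicOrderAt_eq_top_iff.1 htop).frequently
  obtain ⟨z, hz, hz0⟩ := hne
  exact hz0 (eqOn_zero_of_fixedPointForm_eqOn_zero hf hf₁ hα
    (han.eqOn_zero_of_preconnected_of_eventuallyEq_zero isPreconnected_UHP hρ hzero) hz)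

lemma zpow_meromorphicOrderAt_fixedPointForm (h : IsQuasimodularPair α c k γ f f₁)
    (hfd : DifferentiableOn ℂ f UHP) (hf₁d : DifferentiableOn ℂ f₁ UHP)
    (hρ : ρ ∈ UHP) (hfix : moeb γ ρ = ρ) (hr : jfac γ r ≠ 0) (hfixr : moeb γ r = r) {s : ℤ}
    (hs : meromorphicOrderAt (fixedPointForm α f f₁ r) ρ = s) :
    ((jfac γ ρ ^ 2)⁻¹) ^ s = c * jfac γ ρ ^ (k - 1) / jfac γ r := by
  have hj : jfac γ ρ ≠ 0 := jfac_ne_zero (ne_of_gt hρ)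
  have hmult : ContinuousAt (fun z => c * jfac γ z ^ (k - 1) / jfac γ r) ρ := by
    have hjc : ContinuousAt (jfac γ) ρ := by
      unfold jfac
      fun_prop
    exact ((hjc.zpow₀ _ (.inl hj)).const_mul c).div_const _
  refine zpow_meromorphicOrderAt_eq_of_comp_eq_mul (γ := moeb γ)
    (m := fun z => c * jfac γ z ^ (k - 1) / jfac γ r)
    (analyticOnNhd_fixedPointForm hfd hf₁d r ρ hρ).meromorphicAt hs (hasDerivAt_moeb hj)
    (inv_ne_zero (pow_ne_zero 2 hj)) hfix hmult ?_
  filter_upwards [isOpen_UHP.mem_nhds hρ] with z hz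
  exact fixedPointForm_moeb h hz hr hfixr

lemma hasExponentDifference_quasiWronskian {s t : ℤ}
    (hfd : DifferentiableOn ℂ f UHP) (hf₁d : DifferentiableOn ℂ f₁ UHP) (hρ : ρ ∈ UHP)
    (hs : meromorphicOrderAt (fixedPointForm α f f₁ (conj ρ)) ρ = s)
    (ht : meromorphicOrderAt (fixedPointForm α f f₁ ρ) ρ = t) (hst : s ≠ t) :
    HasExponentDifference f (quasiWronskian α f f₁) ρ (t - s) := by
  have hδ : ρ - conj ρ ≠ 0 := sub_conj_ne_zero (ne_of_gt hρ)
  have han (r : ℂ) := analyticOnNhd_fixedPointForm (α := α) hfd hf₁d r ρ hρ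
  refine hasExponentDifference_of_sub_of_wronskian hδ (han _).meromorphicAt (han _).meromorphicAt
    hs ht hst (.of_forall fun z => ?_) (eventually_nhdsWithin_of_eventually_nhds ?_)
  · simp only [Pi.mul_apply, Pi.sub_apply, fixedPointForm]
    field_simp
    ring
  · filter_upwards [isOpen_UHP.mem_nhds hρ] with z hz
    have hfz := (hfd.differentiableAt (isOpen_UHP.mem_nhds hz)).hasDerivAt
    have hf₁z := (hf₁d.differentiableAt (isOpen_UHP.mem_nhds hz)).hasDerivAt
    have hP (r : ℂ) : deriv (fixedPointForm α f f₁ r) z =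
        1 * f z + (z - r) * deriv f z + α * deriv f₁ z :=
      ((((hasDerivAt_id z).sub_const r).mul hfz).add (hf₁z.const_mul α)).deriv
    simp only [Pi.mul_apply, Pi.sub_apply, hP, fixedPointForm, quasiWronskian]
    field_simp
    ring

/-- The multipliers of the eigenfunctions attached to `ρ̄` and `ρ` have ratio `jfac γ ρ ^ 2`, which
pins the difference of their vanishing orders modulo the order of `γ`. -/
lemma exists_zpow_sub_one_eq_one_and_hasExponentDifference
    (h : IsQuasimodularPair α c k γ f f₁)
    (hfd : DifferentiableOn ℂ f UHP) (hf₁d : DifferentiableOn ℂ f₁ UHP)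
    (hf : ∀ z ∈ UHP, f (z + 1) = f z) (hf₁ : ∀ z ∈ UHP, f₁ (z + 1) = f₁ z)
    (hne : ∃ z ∈ UHP, f₁ z ≠ 0) (hα : α ≠ 0)
    (hρ : ρ ∈ UHP) (hfix : moeb γ ρ = ρ) (hj1 : jfac γ ρ ^ 2 ≠ 1) :
    ∃ d : ℤ, d ≠ 0 ∧ (jfac γ ρ ^ 2) ^ (d - 1) = 1 ∧
      HasExponentDifference f (quasiWronskian α f f₁) ρ d := by
  obtain ⟨s, hs⟩ :=
    exists_meromorphicOrderAt_fixedPointForm_eq hfd hf₁d hf hf₁ hne hα hρ (conj ρ)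
  obtain ⟨t, ht⟩ := exists_meromorphicOrderAt_fixedPointForm_eq hfd hf₁d hf hf₁ hne hα hρ ρ
  have him : ρ.im ≠ 0 := ne_of_gt hρ
  have hj : jfac γ ρ ≠ 0 := jfac_ne_zero him
  have hj' : jfac γ (conj ρ) ≠ 0 := jfac_ne_zero (by simpa)
  have hspow := zpow_meromorphicOrderAt_fixedPointForm h hfd hf₁d hρ hfix hj'
    (by rw [moeb_conj, hfix]) hs
  have htpow := zpow_meromorphicOrderAt_fixedPointForm h hfd hf₁d hρ hfix hj hfix ht
  have hconj : jfac γ (conj ρ) = (jfac γ ρ)⁻¹ :=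
    eq_inv_of_mul_eq_one_right (jfac_mul_jfac_conj_eq_one him hfix)
  have hpow : (jfac γ ρ ^ 2) ^ (t - s - 1) = 1 := by
    have hratio : ((jfac γ ρ ^ 2)⁻¹) ^ s = jfac γ ρ ^ 2 * ((jfac γ ρ ^ 2)⁻¹) ^ t := by
      rw [hspow, htpow, hconj]
      field_simp
    have hj2 : jfac γ ρ ^ 2 ≠ 0 := pow_ne_zero 2 hj
    rw [_root_.inv_zpow, _root_.inv_zpow] at hratio
    rw [zpow_sub_one₀ hj2, zpow_sub₀ hj2]
    have := zpow_ne_zero s hj2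
    have := zpow_ne_zero t hj2
    field_simp at hratio ⊢
    exact hratio
  have hst : s ≠ t := by
    rintro rfl
    rw [sub_self, zero_sub, _root_.zpow_neg_one, inv_eq_one] at hpow
    exact hj1 hpow
  exact ⟨t - s, sub_ne_zero.2 hst.symm, hpow,
    hasExponentDifference_quasiWronskian hfd hf₁d hρ hs ht hst⟩

end QuasimodularPair

section EisensteinSeries

variable {z : ℂ} {N : ℕ} [NeZero N]

lemma E2_coe (z : UpperHalfPlane) : E2 z = EisensteinSeries.E2 z := by
  rw [EisensteinSeries.E2_eq_tsum_cexp, E2, tsum_pnat_eq_tsum_succ (f := fun n : ℕ =>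
    (ArithmeticFunction.sigma 1 n : ℂ) * cexp (2 * Real.pi * I * z) ^ n)]
  rfl

lemma differentiableOn_E2 : DifferentiableOn ℂ E2 UHP := by
  refine (UpperHalfPlane.mdifferentiable_iff.1 E2_mdifferentiable).congr fun z hz => ?_
  rw [Function.comp_apply, UpperHalfPlane.ofComplex_apply_of_im_pos hz]
  exact E2_coe ⟨z, hz⟩

lemma periodic_E2 : Function.Periodic E2 1 := by
  intro z
  simp only [E2, qexp, mul_add, Complex.exp_add, mul_one, Complex.exp_two_pi_mul_I]

lemma E2_neg_one_div (hz : z ∈ UHP) :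
    E2 (-1 / z) = z ^ 2 * E2 z + 6 * z / ((Real.pi : ℂ) * I) := by
  have hz0 : z ≠ 0 := ne_zero_of_mem_UHP hz
  have hπ : (Real.pi : ℂ) ≠ 0 := by exact_mod_cast Real.pi_ne_zero
  have hS : ((ModularGroup.S • (⟨z, hz⟩ : UpperHalfPlane) : UpperHalfPlane) : ℂ) = -1 / z := by
    rw [UpperHalfPlane.modular_S_smul]
    simp [neg_div, inv_neg]
  have hE2 : E2 z = EisensteinSeries.E2 ⟨z, hz⟩ := E2_coe ⟨z, hz⟩
  rw [← hS, E2_coe, hE2]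
  simp only [EisensteinSeries.E2, Pi.smul_apply, smul_eq_mul, riemannZeta_two]
  rw [EisensteinSeries.G2_S_transform ⟨z, hz⟩]
  field_simp
  ring_nf
  simp [Complex.I_sq]

/-- The depth-one Eisenstein series `M₂*(z) = (N E₂(Nz) + E₂(z)) / (N + 1)` of level `N`, which is
quasimodular under the Fricke involution `z ↦ -1/(Nz)`. -/
def frickeE2 (N : ℕ) (z : ℂ) : ℂ := (N * E2 (N * z) + E2 z) / (N + 1)

/-- The constant `α` in the quasimodular transformation law of `frickeE2 N`. -/
def frickeAlpha (N : ℕ) : ℂ := 12 / ((N + 1) * ((Real.pi : ℂ) * I))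

lemma frickeAlpha_ne_zero (N : ℕ) : frickeAlpha N ≠ 0 := by
  have hN : (N + 1 : ℂ) ≠ 0 := by exact_mod_cast N.succ_ne_zero
  have hπ : (Real.pi : ℂ) ≠ 0 := by exact_mod_cast Real.pi_ne_zero
  simp [frickeAlpha, hN, hπ]

lemma natCast_mul_mem_UHP (hz : z ∈ UHP) : (N : ℂ) * z ∈ UHP := by
  have hN : (0 : ℝ) < N := by exact_mod_cast NeZero.pos N
  simpa [UHP] using mul_pos hN hz

lemma neg_one_div_mem_UHP (hz : z ∈ UHP) : -1 / z ∈ UHP := by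
  have hnorm := Complex.normSq_pos.2 (ne_zero_of_mem_UHP hz)
  simpa [UHP, Complex.div_im, neg_div] using div_pos hz hnorm

lemma differentiableOn_frickeE2 : DifferentiableOn ℂ (frickeE2 N) UHP := by
  have hN : DifferentiableOn ℂ (fun z => E2 (N * z)) UHP :=
    differentiableOn_E2.comp (by fun_prop) fun _ => natCast_mul_mem_UHP
  exact ((hN.const_mul _).add differentiableOn_E2).div_const _

lemma frickeE2_add_one (N : ℕ) (z : ℂ) : frickeE2 N (z + 1) = frickeE2 N z := by
  have hN : E2 (N * (z + 1)) = E2 (N * z) := by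
    rw [mul_add]
    exact periodic_E2.nat_mul N _
  rw [frickeE2, frickeE2, hN, periodic_E2 z]

lemma frickeE2_neg_one_div (hz : z ∈ UHP) :
    frickeE2 N (-1 / (N * z)) = N * z ^ 2 * frickeE2 N z + frickeAlpha N * (N * z) := by
  have hN : (N : ℂ) ≠ 0 := NeZero.ne _
  have hN1 : (N + 1 : ℂ) ≠ 0 := by exact_mod_cast N.succ_ne_zero
  have hz0 : z ≠ 0 := ne_zero_of_mem_UHP hz
  have hπ : (Real.pi : ℂ) ≠ 0 := by exact_mod_cast Real.pi_ne_zero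
  have hcancel : N * (-1 / (N * z)) = -1 / z := by field_simp
  rw [frickeE2, hcancel, E2_neg_one_div hz, E2_neg_one_div (natCast_mul_mem_UHP hz), frickeE2,
    frickeAlpha]
  field_simp
  ring

lemma frickeE2_two (z : ℂ) : frickeE2 2 z = (2 * E2 (2 * z) + E2 z) / 3 := by
  norm_num [frickeE2]

lemma frickeE2_three (z : ℂ) : frickeE2 3 z = (3 * E2 (3 * z) + E2 z) / 4 := by
  norm_num [frickeE2]

lemma frickeAlpha_two : frickeAlpha 2 = 4 / ((Real.pi : ℂ) * I) := by
  rw [frickeAlpha, ← div_div]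
  norm_num

lemma frickeAlpha_three : frickeAlpha 3 = 3 / ((Real.pi : ℂ) * I) := by
  rw [frickeAlpha, ← div_div]
  norm_num

end EisensteinSeries

section FrickeForms

variable {N : ℕ} [NeZero N] {c z ρ : ℂ} {k : ℤ} {g f₀ f₁ : ℂ → ℂ}

lemma sqrt_natCast_sq (N : ℕ) : ((√N : ℝ) : ℂ) ^ 2 = N := by
  exact_mod_cast Real.sq_sqrt N.cast_nonneg

lemma sqrt_natCast_pos : 0 < √(N : ℝ) := Real.sqrt_pos.2 (Nat.cast_pos.2 (NeZero.pos N))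

lemma sqrt_natCast_ne_zero : ((√N : ℝ) : ℂ) ≠ 0 := by
  exact_mod_cast sqrt_natCast_pos.ne'

/-- The translate `T ^ b * S_N` of the Fricke involution, acting by `z ↦ b - 1/(Nz)`. -/
def frickeElt (N : ℕ) [NeZero N] (b : ℤ) : SL2R :=
  ⟨!![√N * b, -(√N)⁻¹; √N, 0], by
    rw [Matrix.det_fin_two_of, mul_zero, neg_mul, inv_mul_cancel₀ sqrt_natCast_pos.ne', zero_sub,
      neg_neg]⟩

lemma moeb_frickeElt (hz : z ≠ 0) (b : ℤ) : moeb (frickeElt N b) z = -1 / (N * z) + b := by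
  have hN : ((√N : ℝ) : ℂ) ≠ 0 := sqrt_natCast_ne_zero
  rw [← sqrt_natCast_sq N]
  simp only [moeb, frickeElt, Matrix.of_apply, Matrix.cons_val', Matrix.cons_val_zero,
    Matrix.cons_val_one, Matrix.cons_val_fin_one]
  push_cast
  field_simp
  ring

lemma jfac_frickeElt (z : ℂ) (b : ℤ) : jfac (frickeElt N b) z = √N * z := by
  simp [jfac, frickeElt]

/-- Weight-`k` forms of level `N` that are only required to be holomorphic on `ℍ`, invariant under
`z ↦ z + 1`, and multiplied by `c` under the Fricke involution; no condition is imposed at the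
cusps, and none for the other elements of `Γ₀(N)`. -/
structure IsFrickeForm (N : ℕ) (c : ℂ) (k : ℤ) (g : ℂ → ℂ) : Prop where
  holo : DifferentiableOn ℂ g UHP
  add_one : ∀ z ∈ UHP, g (z + 1) = g z
  fricke : ∀ z ∈ UHP, g (-1 / (N * z)) = c * (√N * z) ^ k * g z

lemma apply_add_intCast_of_apply_add_one (hg : ∀ z ∈ UHP, g (z + 1) = g z) (hz : z ∈ UHP)
    (b : ℤ) : g (z + b) = g z := by
  have hmem (n : ℤ) : z + n ∈ UHP := by simpa [UHP] using hz
  induction b with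
  | zero => simp
  | succ n ih =>
    rw [← ih, ← hg _ (hmem n)]
    push_cast
    ring_nf
  | pred n ih =>
    rw [← ih, ← hg _ (hmem (-n - 1))]
    push_cast
    ring_nf

lemma IsFrickeForm.apply_moeb_frickeElt (hg : IsFrickeForm N c k g) (hz : z ∈ UHP) (b : ℤ) :
    g (moeb (frickeElt N b) z) = c * jfac (frickeElt N b) z ^ k * g z := by
  rw [moeb_frickeElt (ne_zero_of_mem_UHP hz), jfac_frickeElt, ← hg.fricke z hz]
  exact apply_add_intCast_of_apply_add_one hg.add_one
    (neg_one_div_mem_UHP (natCast_mul_mem_UHP hz)) b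

lemma frickeE2_moeb_frickeElt (hz : z ∈ UHP) (b : ℤ) :
    frickeE2 N (moeb (frickeElt N b) z) = jfac (frickeElt N b) z ^ 2 *
      (frickeE2 N z + frickeAlpha N * (frickeElt N b).1 1 0 / jfac (frickeElt N b) z) := by
  have hz0 : z ≠ 0 := ne_zero_of_mem_UHP hz
  have hN : ((√N : ℝ) : ℂ) ≠ 0 := sqrt_natCast_ne_zero
  have hentry : (frickeElt N b).1 1 0 = √N := rfl
  rw [moeb_frickeElt hz0, jfac_frickeElt, hentry,
    apply_add_intCast_of_apply_add_one (fun z _ => frickeE2_add_one N z)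
      (neg_one_div_mem_UHP (natCast_mul_mem_UHP hz)), frickeE2_neg_one_div hz, mul_pow,
    sqrt_natCast_sq]
  field_simp

lemma IsFrickeForm.isQuasimodularPair (hf₀ : IsFrickeForm N c k f₀)
    (hf₁ : IsFrickeForm N c (k - 2) f₁) (b : ℤ) :
    IsQuasimodularPair (frickeAlpha N) c k (frickeElt N b) (f₀ + frickeE2 N * f₁) f₁ where
  quasimodular z hz := by
    have hj : jfac (frickeElt N b) z ≠ 0 := jfac_ne_zero (ne_of_gt hz)
    simp only [Pi.add_apply, Pi.mul_apply]
    rw [hf₀.apply_moeb_frickeElt hz, hf₁.apply_moeb_frickeElt hz, frickeE2_moeb_frickeElt hz,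
      zpow_sub₀ hj]
    field_simp
    ring
  modular z hz := hf₁.apply_moeb_frickeElt hz b

/-- The hypothesis `hfix` says that `z ↦ b - 1/(Nz)` fixes `ρ`; the derivative of this map at `ρ`
is then `(N ρ²)⁻¹`. -/
theorem IsFrickeForm.exists_hasExponentDifference (hf₀ : IsFrickeForm N c k f₀)
    (hf₁ : IsFrickeForm N c (k - 2) f₁) (hne : ∃ z ∈ UHP, f₁ z ≠ 0) (hρ : ρ ∈ UHP) {b : ℤ}
    (hfix : N * ρ ^ 2 = b * (N * ρ) - 1) {e : ℕ} (he : 1 < e)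
    (hroot : IsPrimitiveRoot (N * ρ ^ 2) e) :
    ∃ n : ℤ, 1 ≤ n ∧ ((e : ℤ) ∣ n - 1 ∨ (e : ℤ) ∣ n + 1) ∧
      HasExponentDifference (f₀ + frickeE2 N * f₁)
        (quasiWronskian (frickeAlpha N) (f₀ + frickeE2 N * f₁) f₁) ρ n := by
  have hρ0 : ρ ≠ 0 := ne_zero_of_mem_UHP hρ
  have hN : (N : ℂ) ≠ 0 := NeZero.ne _
  have hj : jfac (frickeElt N b) ρ ^ 2 = N * ρ ^ 2 := by
    rw [jfac_frickeElt, mul_pow, sqrt_natCast_sq]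
  have hmoeb : moeb (frickeElt N b) ρ = ρ := by
    rw [moeb_frickeElt hρ0]
    field_simp
    linear_combination -hfix
  obtain ⟨d, hd0, hd, hexp⟩ := exists_zpow_sub_one_eq_one_and_hasExponentDifference
    (hf₀.isQuasimodularPair hf₁ b) (hf₀.holo.add (differentiableOn_frickeE2.mul hf₁.holo)) hf₁.holo
    (fun z hz => by simp [hf₀.add_one z hz, hf₁.add_one z hz, frickeE2_add_one]) hf₁.add_one hne
    (frickeAlpha_ne_zero N) hρ hmoeb (hj ▸ hroot.ne_one he)
  have hdvd : (e : ℤ) ∣ d - 1 := (hroot.zpow_eq_one_iff_dvd _).1 (hj ▸ hd)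
  rcases hd0.lt_or_gt with hneg | hpos
  · exact ⟨-d, by omega, .inr (by rwa [neg_add_eq_sub, dvd_sub_comm]), hexp.neg⟩
  · exact ⟨d, by omega, .inl hdvd, hexp⟩

end FrickeForms

section Groups

variable {c : ℂ} {k : ℤ} {g : ℂ → ℂ} {χ : SL2R → ℂ}

lemma toR_T_mem_Gamma0R (N : ℕ) : toR ModularGroup.T ∈ Gamma0R N :=
  ⟨ModularGroup.T, CongruenceSubgroup.Gamma0_mem.2 (by simp [ModularGroup.coe_T]), rfl⟩

lemma coe_toR_T : (toR ModularGroup.T).1 = !![1, 1; 0, 1] := by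
  rw [toR, Matrix.SpecialLinearGroup.map_apply_coe, ModularGroup.coe_T]
  ext i j
  fin_cases i <;> fin_cases j <;> simp

lemma moeb_toR_T (z : ℂ) : moeb (toR ModularGroup.T) z = z + 1 := by
  simp [moeb, coe_toR_T]

lemma jfac_toR_T (z : ℂ) : jfac (toR ModularGroup.T) z = 1 := by
  simp [jfac, coe_toR_T]

lemma isFrickeForm_two_of_mem_MFplus2 (hg : g ∈ MFplus2 c k) : IsFrickeForm 2 c k g where
  holo := hg.1.holo
  add_one z hz := by
    simpa [moeb_toR_T, jfac_toR_T] using hg.1.transform _ (toR_T_mem_Gamma0R 2) z hz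
  fricke z hz := by
    have hj : ((√2 : ℝ) * z : ℂ) ^ k ≠ 0 :=
      zpow_ne_zero k (mul_ne_zero (sqrt_natCast_ne_zero (N := 2)) (ne_zero_of_mem_UHP hz))
    have h := hg.2 z hz
    rw [_root_.zpow_neg, inv_mul_eq_iff_eq_mul₀ hj] at h
    push_cast
    rw [h]
    ring

lemma S3elt_eq_frickeElt : S3elt = frickeElt 3 0 := by
  apply Subtype.ext
  simp [S3elt, frickeElt]

lemma R3elt_eq_toR_T_mul_S3elt : R3elt = toR ModularGroup.T * S3elt := by
  apply Subtype.ext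
  rw [Matrix.SpecialLinearGroup.coe_mul, coe_toR_T]
  simp [R3elt, S3elt]

lemma toR_T_mem_GammaPlus3 : toR ModularGroup.T ∈ GammaPlus3 :=
  Subgroup.subset_closure (.inl (toR_T_mem_Gamma0R 3))

lemma S3elt_mem_GammaPlus3 : S3elt ∈ GammaPlus3 := Subgroup.subset_closure (.inr rfl)

lemma isFrickeForm_three_of_MFchar (hT : χ (toR ModularGroup.T) = 1)
    (hg : MFchar GammaPlus3 χ k g) : IsFrickeForm 3 (χ S3elt) k g where
  holo := hg.1
  add_one z hz := by
    simpa [moeb_toR_T, jfac_toR_T, hT] using hg.2.1 _ toR_T_mem_GammaPlus3 z hz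
  fricke z hz := by
    have h := hg.2.1 _ S3elt_mem_GammaPlus3 z hz
    rw [S3elt_eq_frickeElt, moeb_frickeElt (ne_zero_of_mem_UHP hz), jfac_frickeElt,
      Int.cast_zero, add_zero] at h
    rw [S3elt_eq_frickeElt, h]

lemma character_toR_T_eq_one
    (hχ : ∀ γ ∈ GammaPlus3, ∀ δ ∈ GammaPlus3, χ (γ * δ) = χ γ * χ δ)
    (hS : χ S3elt ≠ 0) (hSR : χ R3elt = χ S3elt) : χ (toR ModularGroup.T) = 1 := by
  rw [R3elt_eq_toR_T_mul_S3elt, hχ _ toR_T_mem_GammaPlus3 _ S3elt_mem_GammaPlus3] at hSR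
  exact (mul_eq_right₀ hS).1 hSR

end Groups

section EllipticPoints

variable {N : ℕ} [NeZero N] {c : ℂ} {k : ℤ} {f₀ f₁ : ℂ → ℂ}

lemma isPrimitiveRoot_six_of_sq_sub_add_one_eq_zero {ω : ℂ} (hω : ω ^ 2 - ω + 1 = 0) :
    IsPrimitiveRoot ω 6 := by
  rw [← Polynomial.isRoot_cyclotomic_iff, Polynomial.cyclotomic_six]
  simpa using hω

lemma IsFrickeForm.exists_odd_hasExponentDifference_fricke (hf₀ : IsFrickeForm N c k f₀)
    (hf₁ : IsFrickeForm N c (k - 2) f₁) (hne : ∃ z ∈ UHP, f₁ z ≠ 0) :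
    ∃ n : ℤ, 1 ≤ n ∧ Odd n ∧
      HasExponentDifference (f₀ + frickeE2 N * f₁)
        (quasiWronskian (frickeAlpha N) (f₀ + frickeE2 N * f₁) f₁) ((√N : ℂ)⁻¹ * I) n := by
  have hmem : ((√N : ℂ)⁻¹ * I) ∈ UHP := by
    simpa [UHP, ← Complex.ofReal_inv] using sqrt_natCast_pos (N := N)
  have hsq : N * ((√N : ℂ)⁻¹ * I) ^ 2 = -1 := by
    have hN : (N : ℂ) ≠ 0 := NeZero.ne _
    rw [mul_pow, inv_pow, sqrt_natCast_sq, Complex.I_sq]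
    field_simp
  obtain ⟨n, hn, hdvd, hexp⟩ := hf₀.exists_hasExponentDifference hf₁ hne hmem (b := 0)
    (by simpa using hsq) one_lt_two (hsq ▸ IsPrimitiveRoot.neg_one 0 (by norm_num))
  exact ⟨n, hn, by rw [Int.odd_iff]; omega, hexp⟩

lemma IsFrickeForm.exists_odd_hasExponentDifference_two (hf₀ : IsFrickeForm 2 c k f₀)
    (hf₁ : IsFrickeForm 2 c (k - 2) f₁) (hne : ∃ z ∈ UHP, f₁ z ≠ 0) :
    ∃ n : ℤ, 1 ≤ n ∧ Odd n ∧
      HasExponentDifference (f₀ + frickeE2 2 * f₁)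
        (quasiWronskian (frickeAlpha 2) (f₀ + frickeE2 2 * f₁) f₁) ((1 + I) / 2) n := by
  have hmem : (1 + I) / 2 ∈ UHP := by simp [UHP]
  have hsq : (2 : ℕ) * ((1 + I) / 2) ^ 2 = I := by
    push_cast
    linear_combination Complex.I_sq / 2
  obtain ⟨n, hn, hdvd, hexp⟩ := hf₀.exists_hasExponentDifference hf₁ hne hmem (b := 1)
    (by rw [hsq]; push_cast; ring) (by norm_num) (hsq ▸ Complex.isPrimitiveRoot_I)
  exact ⟨n, hn, by rw [Int.odd_iff]; omega, hexp⟩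

lemma IsFrickeForm.exists_coprime_six_hasExponentDifference_three (hf₀ : IsFrickeForm 3 c k f₀)
    (hf₁ : IsFrickeForm 3 c (k - 2) f₁) (hne : ∃ z ∈ UHP, f₁ z ≠ 0) :
    ∃ n : ℤ, 1 ≤ n ∧ Int.gcd n 6 = 1 ∧
      HasExponentDifference (f₀ + frickeE2 3 * f₁)
        (quasiWronskian (frickeAlpha 3) (f₀ + frickeE2 3 * f₁) f₁) ((3 + √3 * I) / 6) n := by
  have hmem : (3 + √3 * I) / 6 ∈ UHP := by simp [UHP]
  have h3 : (√3 : ℂ) ^ 2 = 3 := by exact_mod_cast sqrt_natCast_sq 3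
  have hsq : (3 : ℕ) * ((3 + √3 * I) / 6) ^ 2 = (1 + √3 * I) / 2 := by
    push_cast
    linear_combination (√3 : ℂ) ^ 2 / 12 * Complex.I_sq - h3 / 12
  have hroot : IsPrimitiveRoot ((1 + √3 * I) / 2) 6 :=
    isPrimitiveRoot_six_of_sq_sub_add_one_eq_zero (by
      linear_combination (√3 : ℂ) ^ 2 / 4 * Complex.I_sq - h3 / 4)
  obtain ⟨n, hn, hdvd, hexp⟩ := hf₀.exists_hasExponentDifference hf₁ hne hmem (b := 1)
    (by rw [hsq]; push_cast; ring) (by norm_num) (hsq ▸ hroot)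
  refine ⟨n, hn, Int.isCoprime_iff_gcd_eq_one.1 ?_, hexp⟩
  rcases hdvd with ⟨q, hq⟩ | ⟨q, hq⟩
  · exact ⟨1, -q, by push_cast at hq; linear_combination hq⟩
  · exact ⟨-1, q, by push_cast at hq; linear_combination -hq⟩

end EllipticPoints

lemma HasExponentDifference.tendsto_nhdsWithin_diff {f W : ℂ → ℂ} {ρ : ℂ} {n : ℤ}
    (h : HasExponentDifference f W ρ n) (S : Set ℂ) :
    Tendsto (fun z => (z - ρ) ^ 2 * Qformula f W z) (𝓝[S \ {ρ}] ρ)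
      (𝓝 ((1 / 4 - ((n : ℂ) / 2) ^ 2) / (4 * (Real.pi : ℂ) ^ 2))) :=
  h.mono_left (nhdsWithin_mono ρ fun _ hz => hz.2)

theorem local_exponents_elliptic_Gamma0plus2_and_3_general {c : ℂ} {k : ℤ} {f₀ f₁ : ℂ → ℂ}
    (hne : ∃ z ∈ UHP, f₁ z ≠ 0) :
    (IsFrickeForm 2 c k f₀ → IsFrickeForm 2 c (k - 2) f₁ →
      ∀ f W : ℂ → ℂ, f = f₀ + frickeE2 2 * f₁ → W = quasiWronskian (frickeAlpha 2) f f₁ →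
      ∃ n₁ n₂ : ℤ, 1 ≤ n₁ ∧ 1 ≤ n₂ ∧ Odd n₁ ∧ Odd n₂ ∧
        HasExponentDifference f W ((√2 : ℂ)⁻¹ * I) n₁ ∧
        HasExponentDifference f W ((1 + I) / 2) n₂) ∧
    (IsFrickeForm 3 c k f₀ → IsFrickeForm 3 c (k - 2) f₁ →
      ∀ f W : ℂ → ℂ, f = f₀ + frickeE2 3 * f₁ → W = quasiWronskian (frickeAlpha 3) f f₁ →
      ∃ n₁ n₂ : ℤ, 1 ≤ n₁ ∧ 1 ≤ n₂ ∧ Odd n₁ ∧ Int.gcd n₂ 6 = 1 ∧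
        HasExponentDifference f W ((√3 : ℂ)⁻¹ * I) n₁ ∧
        HasExponentDifference f W ((3 + √3 * I) / 6) n₂) := by
  constructor
  · rintro hf₀ hf₁ _ _ rfl rfl
    obtain ⟨n₁, hn₁, hodd₁, hexp₁⟩ := hf₀.exists_odd_hasExponentDifference_fricke hf₁ hne
    obtain ⟨n₂, hn₂, hodd₂, hexp₂⟩ := hf₀.exists_odd_hasExponentDifference_two hf₁ hne
    exact ⟨n₁, n₂, hn₁, hn₂, hodd₁, hodd₂, mod_cast hexp₁, hexp₂⟩
  · rintro hf₀ hf₁ _ _ rfl rfl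
    obtain ⟨n₁, hn₁, hodd₁, hexp₁⟩ := hf₀.exists_odd_hasExponentDifference_fricke hf₁ hne
    obtain ⟨n₂, hn₂, hgcd₂, hexp₂⟩ := hf₀.exists_coprime_six_hasExponentDifference_three hf₁ hne
    exact ⟨n₁, n₂, hn₁, hn₂, hodd₁, hgcd₂, mod_cast hexp₁, hexp₂⟩

/-- local exponents of `y″ = -4π² Q_f y` at the elliptic points of
`Γ₀⁺(2)` (part (ii)) and of `Γ₀⁺(3)` (part (iii)). -/
theorem local_exponents_elliptic_Gamma0plus2_and_3 :
    -- Part (ii): Γ₀⁺(2)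
    (∀ (k : ℤ), 0 < k → Even k → ∀ ε : ℂ, (ε = 1 ∨ ε = -1) →
      ∀ f₀ ∈ MFplus2 ε k, ∀ f₁ ∈ MFplus2 ε (k - 2), (∃ z ∈ UHP, f₁ z ≠ 0) →
      ∀ f W Q : ℂ → ℂ,
        (∀ z, f z = f₀ z + (2 * E2 (2 * z) + E2 z) / 3 * f₁ z) →
        (∀ z, W z = -(f z) ^ 2 + (4 / ((Real.pi : ℂ) * Complex.I)) *
          (f₁ z * deriv f z - deriv f₁ z * f z)) →
        (∀ z, Q z = Qformula f W z) →
        ∀ S : Set ℂ, S = {z | z ∈ UHP ∧ f z ≠ 0 ∧ W z ≠ 0} →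
        ∃ n₁ n₂ : ℤ, 1 ≤ n₁ ∧ 1 ≤ n₂ ∧ Odd n₁ ∧ Odd n₂ ∧
          Tendsto (fun z : ℂ => (z - ((Real.sqrt 2 : ℂ))⁻¹ * Complex.I) ^ 2 * Q z)
            (𝓝[S \ {((Real.sqrt 2 : ℂ))⁻¹ * Complex.I}] (((Real.sqrt 2 : ℂ))⁻¹ * Complex.I))
            (𝓝 ((1 / 4 - ((n₁ : ℂ) / 2) ^ 2) / (4 * (Real.pi : ℂ) ^ 2))) ∧
          Tendsto (fun z : ℂ => (z - (1 + Complex.I) / 2) ^ 2 * Q z)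
            (𝓝[S \ {(1 + Complex.I) / 2}] ((1 + Complex.I) / 2))
            (𝓝 ((1 / 4 - ((n₂ : ℂ) / 2) ^ 2) / (4 * (Real.pi : ℂ) ^ 2)))) ∧
    -- Part (iii): Γ₀⁺(3)
    (∀ χ : SL2R → ℂ,
      (∀ γ ∈ GammaPlus3, ∀ δ ∈ GammaPlus3, χ (γ * δ) = χ γ * χ δ) →
      χ S3elt = -Complex.I → χ R3elt = -Complex.I →
      ∀ m : ℕ, m ≤ 3 → ∀ k : ℤ, 0 < k → (2 : ℤ) ∣ (k - m) →
      ∀ f₀ f₁ : ℂ → ℂ,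
        MFchar GammaPlus3 (fun γ => χ γ ^ m) k f₀ →
        MFchar GammaPlus3 (fun γ => χ γ ^ m) (k - 2) f₁ →
        (∃ z ∈ UHP, f₁ z ≠ 0) →
      ∀ f W Q : ℂ → ℂ,
        (∀ z, f z = f₀ z + (3 * E2 (3 * z) + E2 z) / 4 * f₁ z) →
        (∀ z, W z = -(f z) ^ 2 + (3 / ((Real.pi : ℂ) * Complex.I)) *
          (f₁ z * deriv f z - deriv f₁ z * f z)) →
        (∀ z, Q z = Qformula f W z) →
        ∀ S : Set ℂ, S = {z | z ∈ UHP ∧ f z ≠ 0 ∧ W z ≠ 0} →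
        ∃ n₁ n₂ : ℤ, 1 ≤ n₁ ∧ 1 ≤ n₂ ∧ Odd n₁ ∧ Int.gcd n₂ 6 = 1 ∧
          Tendsto (fun z : ℂ => (z - ((Real.sqrt 3 : ℂ))⁻¹ * Complex.I) ^ 2 * Q z)
            (𝓝[S \ {((Real.sqrt 3 : ℂ))⁻¹ * Complex.I}] (((Real.sqrt 3 : ℂ))⁻¹ * Complex.I))
            (𝓝 ((1 / 4 - ((n₁ : ℂ) / 2) ^ 2) / (4 * (Real.pi : ℂ) ^ 2))) ∧
          Tendsto (fun z : ℂ => (z - (3 + Real.sqrt 3 * Complex.I) / 6) ^ 2 * Q z)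
            (𝓝[S \ {(3 + Real.sqrt 3 * Complex.I) / 6}] ((3 + Real.sqrt 3 * Complex.I) / 6))
            (𝓝 ((1 / 4 - ((n₂ : ℂ) / 2) ^ 2) / (4 * (Real.pi : ℂ) ^ 2)))) := by
  constructor
  · intro k _ _ ε _ f₀ hf₀ f₁ hf₁ hne f W Q hf hW hQ S _
    obtain rfl : Q = Qformula f W := funext hQ
    obtain ⟨n₁, n₂, hn₁, hn₂, hodd₁, hodd₂, hexp₁, hexp₂⟩ :=
      (local_exponents_elliptic_Gamma0plus2_and_3_general hne).1
        (isFrickeForm_two_of_mem_MFplus2 hf₀) (isFrickeForm_two_of_mem_MFplus2 hf₁) f W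
        (funext fun z => by simp [hf, frickeE2_two])
        (funext fun z => by rw [hW, quasiWronskian, frickeAlpha_two])
    exact ⟨n₁, n₂, hn₁, hn₂, hodd₁, hodd₂, hexp₁.tendsto_nhdsWithin_diff S,
      hexp₂.tendsto_nhdsWithin_diff S⟩
  · intro χ hχ hS hR m _ k _ _ f₀ f₁ hf₀ hf₁ hne f W Q hf hW hQ S _
    obtain rfl : Q = Qformula f W := funext hQ
    have hT : χ (toR ModularGroup.T) ^ m = 1 := by
      rw [character_toR_T_eq_one hχ (by simp [hS]) (hR.trans hS.symm), one_pow]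
    obtain ⟨n₁, n₂, hn₁, hn₂, hodd₁, hgcd₂, hexp₁, hexp₂⟩ :=
      (local_exponents_elliptic_Gamma0plus2_and_3_general hne).2
        (isFrickeForm_three_of_MFchar hT hf₀) (isFrickeForm_three_of_MFchar hT hf₁) f W
        (funext fun z => by simp [hf, frickeE2_three])
        (funext fun z => by rw [hW, quasiWronskian, frickeAlpha_three])
    exact ⟨n₁, n₂, hn₁, hn₂, hodd₁, hgcd₂, hexp₁.tendsto_nhdsWithin_diff S,
      hexp₂.tendsto_nhdsWithin_diff S⟩
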